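/- Let 0 < γ < L and λ ∈ (0, 1). Set r := √(1 − (γ/L)²) and 𝒯 := (1/(L·r)) · artanh( r(1−λ) / ( 2(λ/(λ+1))(γ/L − 1) + 1 + λ ) ). Then the argument of artanh lies in (0, 1), so 𝒯 is a well-defined positive real number, and if φ : [0, 𝒯] → ℝ is differentiable with φ(0) = 1/λ and φ'(τ) = −2Lφ(τ) − γ(φ(τ)² + 1) for all τ ∈ [0, 𝒯], then λ ≤ φ(τ) ≤ 1/λ for all τ ∈ [0, 𝒯]. -/

import Mathlib

/-- The inverse hyperbolic tangent, `artanh x = (1/2)·log((1+x)/(1-x))`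
(this Mathlib version does not provide it). -/
noncomputable def artanh (x : ℝ) : ℝ := 1 / 2 * Real.log ((1 + x) / (1 - x))

/-! A Riccati equation linearizes: its solution is the quotient `v / w` of the two components of a
linear system. Here the system is `v' = -L v - γ w`, `w' = γ v + L w`, started at `(1, λ)`; its
matrix squares to `ω² = L² - γ²`, so `v` and `w` are combinations of `cosh (ω t)` and `sinh (ω t)`.
The upper bound `λ v ≤ w` and the lower bound `λ w ≤ v` then become explicit, and the latter holds
exactly until `tanh (ω t)` reaches `ω (1 - λ²) / (L (1 + λ²) + 2 γ λ)`, the argument of `artanh`. -/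

open Set

section LinearODE

theorem eqOn_zero_of_hasDerivWithinAt_clm_apply {E : Type*} [NormedAddCommGroup E]
    [NormedSpace ℝ E] {A : ℝ → E →L[ℝ] E} {u : ℝ → E} {a b : ℝ} (hA : ContinuousOn A (Icc a b))
    (hu : ∀ t ∈ Icc a b, HasDerivWithinAt u (A t (u t)) (Icc a b) t) (hua : u a = 0) :
    EqOn u 0 (Icc a b) := by
  obtain ⟨K, hK⟩ := isCompact_Icc.exists_bound_of_continuousOn hA
  have hlip : ∀ t ∈ Ico a b, LipschitzOnWith K.toNNReal (A t) univ := fun t ht ↦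
    ((A t).lipschitz.weaken (NNReal.coe_le_coe.mp
      ((hK t (Ico_subset_Icc_self ht)).trans (Real.le_coe_toNNReal K)))).lipschitzOnWith
  refine ODE_solution_unique_of_mem_Icc_right hlip (fun t ht ↦ (hu t ht).continuousWithinAt)
    (fun t ht ↦ (hu t (Ico_subset_Icc_self ht)).mono_of_mem_nhdsWithin
      (Icc_mem_nhdsGE_of_mem ht)) (fun _ _ ↦ mem_univ _) continuousOn_const (fun t _ ↦ ?_)
    (fun _ _ ↦ mem_univ _) hua
  simpa using! hasDerivWithinAt_const t (Ici t) (0 : E)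

/-- Radon's lemma in division-free form: `φ = v w⁻¹` wherever `w` is invertible. -/
theorem riccati_mul_eqOn_of_linear_system {R : Type*} [NormedRing R] [NormedAlgebra ℝ R]
    {a b c d φ v w : ℝ → R} {t₀ t₁ : ℝ}
    (ha : ContinuousOn a (Icc t₀ t₁)) (hc : ContinuousOn c (Icc t₀ t₁))
    (hφ : ∀ t ∈ Icc t₀ t₁, HasDerivWithinAt φ
      (b t + a t * φ t - φ t * d t - φ t * c t * φ t) (Icc t₀ t₁) t)
    (hv : ∀ t ∈ Icc t₀ t₁, HasDerivWithinAt v (a t * v t + b t * w t) (Icc t₀ t₁) t)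
    (hw : ∀ t ∈ Icc t₀ t₁, HasDerivWithinAt w (c t * v t + d t * w t) (Icc t₀ t₁) t)
    (h₀ : φ t₀ * w t₀ = v t₀) :
    EqOn (φ * w) v (Icc t₀ t₁) := by
  have hφc : ContinuousOn φ (Icc t₀ t₁) := fun t ht ↦ (hφ t ht).continuousWithinAt
  have hcoeff : ContinuousOn (fun t ↦ ContinuousLinearMap.mul ℝ R (a t - φ t * c t)) (Icc t₀ t₁) :=
    (ContinuousLinearMap.mul ℝ R).continuous.comp_continuousOn (ha.sub (hφc.mul hc))
  -- The defect solves the linear equation `u' = (a - φ c) u`.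
  have hdefect : EqOn (φ * w - v) 0 (Icc t₀ t₁) := by
    refine eqOn_zero_of_hasDerivWithinAt_clm_apply hcoeff (fun t ht ↦ ?_) (sub_eq_zero.mpr h₀)
    refine (((hφ t ht).mul (hw t ht)).sub (hv t ht)).congr_deriv ?_
    simp only [ContinuousLinearMap.mul_apply', Pi.sub_apply, Pi.mul_apply]
    noncomm_ring
  exact fun t ht ↦ sub_eq_zero.mp (hdefect ht)

end LinearODE

section HyperbolicCurve

/-- The solution of `z'' = ω² z` with `z 0 = x` and `z' 0 = x'`, for `ω ≠ 0`. -/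
noncomputable def hyperbolicCurve (ω x x' t : ℝ) : ℝ :=
  Real.cosh (ω * t) * x + Real.sinh (ω * t) / ω * x'

variable {ω x x' y t : ℝ}

theorem hyperbolicCurve_zero : hyperbolicCurve ω x x' 0 = x := by
  simp [hyperbolicCurve]

theorem hasDerivAt_hyperbolicCurve (hω : ω ≠ 0) :
    HasDerivAt (hyperbolicCurve ω x x') (hyperbolicCurve ω x' (ω ^ 2 * x) t) t := by
  have hlin : HasDerivAt (fun s ↦ ω * s) ω t := by
    simpa using (hasDerivAt_id t).const_mul ω
  refine ((hlin.cosh.mul_const x).add ((hlin.sinh.div_const ω).mul_const x')).congr_deriv ?_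
  rw [hyperbolicCurve]
  field_simp
  ring

theorem hyperbolicCurve_nonneg (hω : 0 < ω) (hx : 0 ≤ x) (hslope : 0 ≤ x') (ht : 0 ≤ t) :
    0 ≤ hyperbolicCurve ω x x' t := by
  have hsinh : 0 ≤ Real.sinh (ω * t) := Real.sinh_nonneg_iff.mpr (mul_nonneg hω.le ht)
  exact add_nonneg (mul_nonneg (Real.cosh_pos _).le hx)
    (mul_nonneg (div_nonneg hsinh hω.le) hslope)

/-- Along the contracting eigenvector `x' = -ω x` the curve is `exp (-ω t) x`. -/
theorem hyperbolicCurve_pos (hω : 0 < ω) (hx : 0 < x) (hslope : -(ω * x) ≤ x') (ht : 0 ≤ t) :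
    0 < hyperbolicCurve ω x x' t := by
  have hdecomp : hyperbolicCurve ω x x' t =
      Real.exp (-(ω * t)) * x + hyperbolicCurve ω 0 (x' + ω * x) t := by
    rw [hyperbolicCurve, hyperbolicCurve, ← Real.cosh_sub_sinh]
    field_simp
    ring
  have hrest : 0 ≤ hyperbolicCurve ω 0 (x' + ω * x) t :=
    hyperbolicCurve_nonneg hω le_rfl (by linarith) ht
  rw [hdecomp]
  positivity

theorem hyperbolicCurve_neg_nonneg_iff (hω : 0 < ω) (hy : 0 < y) :
    0 ≤ hyperbolicCurve ω x (-y) t ↔ Real.tanh (ω * t) ≤ ω * x / y := by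
  have hscale : ω * hyperbolicCurve ω x (-y) t =
      ω * x * Real.cosh (ω * t) - Real.sinh (ω * t) * y := by
    rw [hyperbolicCurve]
    field_simp
    ring
  rw [Real.tanh_eq_sinh_div_cosh, div_le_div_iff₀ (Real.cosh_pos _) hy,
    ← sub_nonneg (b := Real.sinh (ω * t) * y), ← hscale, mul_nonneg_iff_of_pos_left hω]

end HyperbolicCurve

theorem tanh_le_iff_le_artanh {x y : ℝ} (hy : y ∈ Ioo (-1) 1) :
    Real.tanh x ≤ y ↔ x ≤ Real.artanh y := by
  rw [← Real.artanh_le_artanh_iff (Real.tanh_bijOn.mapsTo (mem_univ x)) hy, Real.artanh_tanh]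

theorem artanh_eq_realArtanh {x : ℝ} (hx : x ∈ Icc (-1) 1) : artanh x = Real.artanh x :=
  (Real.artanh_eq_half_log hx).symm

section RiccatiClock

/-- The value of `tanh (ω t)` at the time `t` when the clock `φ` reaches `λ`. With
`ω = L r` it is the argument of `artanh` in the transmission interval bound, see `clockArg_eq`. -/
noncomputable def clockArg (L γ ω lam : ℝ) : ℝ :=
  ω * (1 - lam ^ 2) / (L * (1 + lam ^ 2) + 2 * γ * lam)

variable {L γ ω lam : ℝ}

theorem clockArg_eq (hL : L ≠ 0) (hlam : lam + 1 ≠ 0) (r : ℝ) :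
    clockArg L γ (L * r) lam =
      r * (1 - lam) / (2 * (lam / (lam + 1)) * (γ / L - 1) + 1 + lam) := by
  have hden : 2 * (lam / (lam + 1)) * (γ / L - 1) + 1 + lam =
      (L * (1 + lam ^ 2) + 2 * γ * lam) / (L * (lam + 1)) := by
    field_simp
    ring
  rw [clockArg, hden, div_div_eq_mul_div]
  ring

theorem clockArg_den_pos (hγ : |γ| < L) (hlam : 0 < lam) :
    0 < L * (1 + lam ^ 2) + 2 * γ * lam := by
  have hL : 0 < L := (abs_nonneg γ).trans_lt hγ
  have hLγ : 0 < L + γ := by linarith [(abs_lt.mp hγ).1]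
  calc 0 < L * (1 - lam) ^ 2 + 2 * lam * (L + γ) := by positivity
    _ = L * (1 + lam ^ 2) + 2 * γ * lam := by ring

theorem clockArg_mem_Ioo (hω₀ : 0 < ω) (hω : ω ^ 2 = L ^ 2 - γ ^ 2) (hlam : lam ^ 2 < 1)
    (hdecr : 0 < 2 * L * lam + γ * (1 + lam ^ 2)) (hden : 0 < L * (1 + lam ^ 2) + 2 * γ * lam) :
    clockArg L γ ω lam ∈ Ioo 0 1 := by
  have hpyth : (L * (1 + lam ^ 2) + 2 * γ * lam) ^ 2 =
      (ω * (1 - lam ^ 2)) ^ 2 + (2 * L * lam + γ * (1 + lam ^ 2)) ^ 2 := by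
    linear_combination -(1 - lam ^ 2) ^ 2 * hω
  have hlt : ω * (1 - lam ^ 2) < L * (1 + lam ^ 2) + 2 * γ * lam :=
    lt_of_pow_lt_pow_left₀ 2 hden.le (hpyth ▸ lt_add_of_pos_right _ (by positivity))
  exact ⟨div_pos (mul_pos hω₀ (sub_pos.mpr hlam)) hden, (div_lt_one hden).mpr hlt⟩

theorem abs_lt_of_clock_decreasing (hγ : γ < L)
    (hdecr : 0 < 2 * L * lam + γ * (1 + lam ^ 2)) : |γ| < L := by
  have hone : 0 < 1 + lam ^ 2 := by positivity
  have hL : 0 < L := by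
    have hmul : 0 < L * (1 + lam) ^ 2 := by
      linarith [mul_lt_mul_of_pos_right hγ hone]
    exact pos_of_mul_pos_left hmul (sq_nonneg _)
  refine abs_lt.mpr ⟨?_, hγ⟩
  by_contra! hle
  have hsq : 0 ≤ L * (1 - lam) ^ 2 := by positivity
  linarith [mul_le_mul_of_nonneg_right hle hone.le]

theorem clock_quotient_den_pos (hω₀ : 0 < ω) (hω : ω ^ 2 = L ^ 2 - γ ^ 2) (hL : 0 < L)
    (hlam : 0 < lam) (hdecr : 0 < 2 * L * lam + γ * (1 + lam ^ 2)) {t : ℝ} (ht : 0 ≤ t) :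
    0 < hyperbolicCurve ω lam (γ + L * lam) t := by
  refine hyperbolicCurve_pos hω₀ hlam ?_ ht
  by_contra! hlt
  have hfactor : γ * (2 * L * lam + γ * (1 + lam ^ 2)) =
      (γ + L * lam - ω * lam) * (γ + L * lam + ω * lam) := by
    linear_combination lam ^ 2 * hω
  have hωlam : 0 < ω * lam := mul_pos hω₀ hlam
  have hγ : 0 < γ :=
    pos_of_mul_pos_left (hfactor ▸ mul_pos_of_neg_of_neg (by linarith) (by linarith)) hdecr.le
  linarith [mul_pos hL hlam]

variable {T : ℝ} {φ : ℝ → ℝ}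

theorem clock_mul_hyperbolicCurve_eqOn (hω₀ : ω ≠ 0) (hω : ω ^ 2 = L ^ 2 - γ ^ 2)
    (hlam : lam ≠ 0) (hφ₀ : φ 0 = 1 / lam)
    (hφ : ∀ τ ∈ Icc 0 T,
      HasDerivWithinAt φ (-2 * L * φ τ - γ * (φ τ ^ 2 + 1)) (Icc 0 T) τ) :
    EqOn (φ * hyperbolicCurve ω lam (γ + L * lam)) (hyperbolicCurve ω 1 (-(L + γ * lam)))
      (Icc 0 T) := by
  refine riccati_mul_eqOn_of_linear_system (a := fun _ ↦ -L) (b := fun _ ↦ -γ) (c := fun _ ↦ γ)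
    (d := fun _ ↦ L) continuousOn_const continuousOn_const
    (fun τ hτ ↦ (hφ τ hτ).congr_deriv (by ring))
    (fun τ _ ↦ (hasDerivAt_hyperbolicCurve hω₀).hasDerivWithinAt.congr_deriv ?_)
    (fun τ _ ↦ (hasDerivAt_hyperbolicCurve hω₀).hasDerivWithinAt.congr_deriv ?_) ?_
  · simp only [hyperbolicCurve, hω]
    ring
  · simp only [hyperbolicCurve, hω]
    ring
  · rw [hyperbolicCurve_zero, hyperbolicCurve_zero, hφ₀, one_div_mul_cancel hlam]

theorem clock_mem_Icc_of_tanh_le (hω₀ : 0 < ω) (hω : ω ^ 2 = L ^ 2 - γ ^ 2) (hγ : |γ| < L)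
    (hlam : 0 < lam) (hdecr : 0 < 2 * L * lam + γ * (1 + lam ^ 2)) (hφ₀ : φ 0 = 1 / lam)
    (hφ : ∀ τ ∈ Icc 0 T,
      HasDerivWithinAt φ (-2 * L * φ τ - γ * (φ τ ^ 2 + 1)) (Icc 0 T) τ)
    {τ : ℝ} (hτ : τ ∈ Icc 0 T) (htanh : Real.tanh (ω * τ) ≤ clockArg L γ ω lam) :
    φ τ ∈ Icc lam (1 / lam) := by
  set v := hyperbolicCurve ω 1 (-(L + γ * lam)) τ with hv
  set w := hyperbolicCurve ω lam (γ + L * lam) τ with hw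
  have hφτ : φ τ * w = v := clock_mul_hyperbolicCurve_eqOn hω₀.ne' hω hlam.ne' hφ₀ hφ hτ
  have hw_pos : 0 < w := clock_quotient_den_pos hω₀ hω ((abs_nonneg γ).trans_lt hγ) hlam hdecr hτ.1
  have hlower : 0 ≤ v - lam * w := by
    have hcurve : v - lam * w =
        hyperbolicCurve ω (1 - lam ^ 2) (-(L * (1 + lam ^ 2) + 2 * γ * lam)) τ := by
      simp only [hv, hw, hyperbolicCurve]
      ring
    rw [hcurve]
    exact (hyperbolicCurve_neg_nonneg_iff hω₀ (clockArg_den_pos hγ hlam)).mpr htanh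
  have hupper : 0 ≤ w - lam * v := by
    have hcurve : w - lam * v = hyperbolicCurve ω 0 (2 * L * lam + γ * (1 + lam ^ 2)) τ := by
      simp only [hv, hw, hyperbolicCurve]
      ring
    rw [hcurve]
    exact hyperbolicCurve_nonneg hω₀ le_rfl hdecr.le hτ.1
  rw [eq_div_of_mul_eq hw_pos.ne' hφτ]
  exact ⟨(le_div_iff₀ hw_pos).mpr (by linarith), (div_le_div_iff₀ hw_pos hlam).mpr (by linarith)⟩

end RiccatiClock

theorem mul_sqrt_one_sub_div_sq {L : ℝ} (hL : 0 < L) (γ : ℝ) :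
    L * Real.sqrt (1 - (γ / L) ^ 2) = Real.sqrt (L ^ 2 - γ ^ 2) := by
  have hfactor : L ^ 2 - γ ^ 2 = L ^ 2 * (1 - (γ / L) ^ 2) := by
    field_simp
  rw [hfactor, Real.sqrt_mul (sq_nonneg L), Real.sqrt_sq hL.le]

/-- The sign condition `hdecr` means `φ' < 0` at both ends `φ = λ` and `φ = 1/λ`. -/
theorem riccati_clock_bounds_gamma_lt_L_general
    (L γ lam : ℝ) (hdecr : 0 < 2 * L * lam + γ * (1 + lam ^ 2)) (hγ : γ < L) (hlam0 : 0 < lam)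
    (hlam1 : lam < 1) (r A T : ℝ)
    (hr : r = Real.sqrt (1 - (γ / L) ^ 2))
    (hA : A = r * (1 - lam) / (2 * (lam / (lam + 1)) * (γ / L - 1) + 1 + lam))
    (hT : T = 1 / (L * r) * artanh A)
    (φ : ℝ → ℝ) (hφ0 : φ 0 = 1 / lam)
    (hderiv : ∀ τ ∈ Icc (0 : ℝ) T,
      HasDerivWithinAt φ (-2 * L * φ τ - γ * ((φ τ) ^ 2 + 1)) (Icc (0 : ℝ) T) τ) :
    (0 < A ∧ A < 1) ∧ 0 < T ∧ ∀ τ ∈ Icc (0 : ℝ) T, lam ≤ φ τ ∧ φ τ ≤ 1 / lam := by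
  have hγ_abs : |γ| < L := abs_lt_of_clock_decreasing hγ hdecr
  have hL : 0 < L := (abs_nonneg γ).trans_lt hγ_abs
  have hdisc : 0 < L ^ 2 - γ ^ 2 := sub_pos.mpr (sq_lt_sq' (abs_lt.mp hγ_abs).1 hγ)
  have hω_eq : L * r = Real.sqrt (L ^ 2 - γ ^ 2) := by rw [hr, mul_sqrt_one_sub_div_sq hL]
  have hω₀ : 0 < L * r := hω_eq ▸ Real.sqrt_pos.mpr hdisc
  have hω : (L * r) ^ 2 = L ^ 2 - γ ^ 2 := by rw [hω_eq, Real.sq_sqrt hdisc.le]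
  rw [← clockArg_eq hL.ne' (by positivity)] at hA
  have hA_mem : A ∈ Ioo 0 1 := hA ▸ clockArg_mem_Ioo hω₀ hω
    (pow_lt_one₀ hlam0.le hlam1 two_ne_zero) hdecr (clockArg_den_pos hγ_abs hlam0)
  have hA_mem' : A ∈ Ioo (-1) 1 := Ioo_subset_Ioo_left (by norm_num) hA_mem
  rw [artanh_eq_realArtanh (Ioo_subset_Icc_self hA_mem'), one_div_mul_eq_div] at hT
  refine ⟨hA_mem, hT ▸ div_pos (Real.artanh_pos hA_mem) hω₀, fun τ hτ ↦ ?_⟩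
  have htanh : Real.tanh (L * r * τ) ≤ A :=
    (tanh_le_iff_le_artanh hA_mem').mpr ((le_div_iff₀' hω₀).mp (hτ.2.trans_eq hT))
  exact clock_mem_Icc_of_tanh_le hω₀ hω hγ_abs hlam0 hdecr hφ0 hderiv hτ (htanh.trans_eq hA)

/-- **The Riccati clock stays in `[λ, 1/λ]` on `[0, 𝒯]`, case `γ < L`.**
With `r = √(1 - (γ/L)²)` and
`A = r(1-λ) / (2(λ/(λ+1))(γ/L - 1) + 1 + λ)`, the argument `A` of `artanh`
lies in `(0,1)`, so `𝒯 = (1/(L·r))·artanh A` is a well-defined positive real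
number, and any solution of `φ' = -2Lφ - γ(φ² + 1)` with `φ(0) = 1/λ`
satisfies `λ ≤ φ(τ) ≤ 1/λ` for all `τ ∈ [0, 𝒯]`. -/
theorem riccati_clock_bounds_gamma_lt_L
    (L γ lam : ℝ) (hL : 0 < γ) (hγ : γ < L) (hlam0 : 0 < lam) (hlam1 : lam < 1)
    (r A T : ℝ)
    (hr : r = Real.sqrt (1 - (γ / L) ^ 2))
    (hA : A = r * (1 - lam) / (2 * (lam / (lam + 1)) * (γ / L - 1) + 1 + lam))
    (hT : T = 1 / (L * r) * artanh A)
    (φ : ℝ → ℝ) (hφ0 : φ 0 = 1 / lam)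
    (hderiv : ∀ τ ∈ Set.Icc (0 : ℝ) T,
      HasDerivWithinAt φ (-2 * L * φ τ - γ * ((φ τ) ^ 2 + 1)) (Set.Icc (0 : ℝ) T) τ) :
    (0 < A ∧ A < 1) ∧ 0 < T ∧
      ∀ τ ∈ Set.Icc (0 : ℝ) T, lam ≤ φ τ ∧ φ τ ≤ 1 / lam := by
  have hL_pos : 0 < L := hL.trans hγ
  exact riccati_clock_bounds_gamma_lt_L_general L γ lam (by positivity) hγ hlam0 hlam1 r A T
    hr hA hT φ hφ0 hderiv
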